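/- Let P be the tropical polytope generated by v^1,…,v^p ∈ ℝ^n. If v is an extreme point of P of type i, then there exists an open neighborhood N of v in ℝ^n such that v ∈ S(x,i) for every x ∈ P ∩ N. -/

import Mathlib

section Defs
variable {α : Type*} [LinearOrder α] [AddCommGroup α]

/-- The sector `S(a,i) = {x | x_j - a_j ≤ x_i - a_i for all j}`. -/
def sector {n : ℕ} (a : Fin n → α) (i : Fin n) : Set (Fin n → α) :=
  {x | ∀ j, x j - a j ≤ x i - a i}

/-- The tropical polytope generated by the points `v 0, …, v (p-1)`:
each coordinate of `x` is the maximum over `r` of `l r + v r i`. -/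
def tropPoly {n p : ℕ} (v : Fin p → Fin n → α) : Set (Fin n → α) :=
  {x | ∃ l : Fin p → α, ∀ i, IsGreatest (Set.range fun r => l r + v r i) (x i)}

/-- `v` is an extreme point of `P` of type `i`. -/
def ExtremeOfType {n : ℕ} (P : Set (Fin n → α)) (v : Fin n → α) (i : Fin n) : Prop :=
  v ∈ P ∧ ∀ x ∈ P ∩ sector v i, ∃ c : α, x = fun k => v k + c

/-- `v` is an extreme point of `P`. -/
def IsExtremePt {n : ℕ} (P : Set (Fin n → α)) (v : Fin n → α) : Prop :=
  v ∈ P ∧ ∀ x ∈ P, ∀ y ∈ P, (∀ k, v k = max (x k) (y k)) → v = x ∨ v = y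

/-- The tropical half-space `H(a,I)`: `max_{i ∈ I} (x_i - a_i) ≥ max_{j ∉ I} (x_j - a_j)`. -/
def halfSpace {n : ℕ} (a : Fin n → α) (I : Set (Fin n)) : Set (Fin n → α) :=
  {x | ∃ i ∈ I, ∀ j ∉ I, x j - a j ≤ x i - a i}

/-- `S_i(a)`, the set of indices `r` such that `v r ∈ S(a, i)`. -/
def typeSet {n p : ℕ} (v : Fin p → Fin n → α) (a : Fin n → α) (i : Fin n) : Set (Fin p) :=
  {r | v r ∈ sector a i}

/-- `a` is an `(I,j)`-pseudovertex of the tropical polytope generated by `v`. -/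
def IsPseudovertex {n p : ℕ} (v : Fin p → Fin n → α) (a : Fin n → α) (I : Set (Fin n))
    (j : Fin n) : Prop :=
  (∀ r, ∃ i ∈ I, r ∈ typeSet v a i) ∧
  (∀ k ∉ I, ∃ i ∈ I, (typeSet v a i ∩ typeSet v a k).Nonempty) ∧
  (∀ i ∈ I, ∃ r, r ∈ typeSet v a i ∩ typeSet v a j ∧ ∀ h ∈ I, h ≠ i → r ∉ typeSet v a h)

end Defs

/-- `P` is pure: `P₀ = {x ∈ P | x 0 = 0}` equals the closure of its interior, relative to
the hyperplane `{x | x 0 = 0}` with the subspace topology. -/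
def IsPure {n : ℕ} [NeZero n] (P : Set (Fin n → ℝ)) : Prop :=
  letI P0 : Set {x : Fin n → ℝ // x 0 = 0} := {x | (x : Fin n → ℝ) ∈ P}
  P0 = closure (interior P0)

/-!
For a fixed index `i`, the relation `x ∈ S(a,i)` between `x` and `a` is a preorder, and it is closed
in `a`. Every point `x` of the polytope has a generator in `S(x,i)`, namely one attaining the
maximum in coordinate `i`. As there are finitely many generators, closedness shows that for `x`
close to `v` each generator in `S(x,i)` already lies in `S(v,i)`. Extremality makes such a generator
a translate of `v`, so `v` lies in its sector and hence, by transitivity, in `S(x,i)`.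
-/

open Filter Topology

section OrderedGroup

variable {α : Type*} [LinearOrder α] [AddCommGroup α] [IsOrderedAddMonoid α] {n p : ℕ}

theorem mem_sector_trans {a b c : Fin n → α} {i : Fin n} (hcb : c ∈ sector b i)
    (hba : b ∈ sector a i) : c ∈ sector a i := fun j => by
  simpa only [sub_add_sub_cancel] using add_le_add (hcb j) (hba j)

theorem generator_mem_tropPoly (vs : Fin p → Fin n → α) (r : Fin p) : vs r ∈ tropPoly vs := by
  have exists_shift_le (s : Fin p) : ∃ c : α, ∀ k, c + vs s k ≤ vs r k := by
    obtain ⟨c, hc⟩ := (Set.finite_range fun k => vs r k - vs s k).bddBelow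
    exact ⟨c, fun k => le_sub_iff_add_le.mp (hc ⟨k, rfl⟩)⟩
  choose c hc using exists_shift_le
  refine ⟨Function.update c r 0, fun k => ⟨⟨r, by simp⟩, ?_⟩⟩
  rintro _ ⟨s, rfl⟩
  obtain rfl | hsr := eq_or_ne s r
  · simp
  · simpa [hsr] using hc s k

theorem exists_generator_mem_sector {vs : Fin p → Fin n → α} {x : Fin n → α}
    (hx : x ∈ tropPoly vs) (i : Fin n) : ∃ r, vs r ∈ sector x i := by
  obtain ⟨l, hl⟩ := hx
  obtain ⟨r, hr : l r + vs r i = x i⟩ := (hl i).1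
  refine ⟨r, fun j => ?_⟩
  have hj : l r + vs r j ≤ x j := (hl j).2 ⟨r, rfl⟩
  calc vs r j - x j ≤ -l r := by rwa [sub_le_iff_le_add, le_neg_add_iff_add_le]
    _ = vs r i - x i := by rw [← hr]; abel

end OrderedGroup

theorem ExtremeOfType.mem_sector_of_mem_sector {α : Type*} [LinearOrder α] [AddCommGroup α] {n : ℕ}
    {P : Set (Fin n → α)} {v x : Fin n → α} {i : Fin n} (hv : ExtremeOfType P v i) (hxP : x ∈ P)
    (hx : x ∈ sector v i) : v ∈ sector x i := by
  obtain ⟨c, rfl⟩ := hv.2 x ⟨hxP, hx⟩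
  intro j
  simp only [sub_add_cancel_left, le_refl]

section Topology

variable {α : Type*} [LinearOrder α] [AddCommGroup α] [TopologicalSpace α] [OrderClosedTopology α]
  [ContinuousSub α] {n p : ℕ}

theorem isClosed_setOf_mem_sector (x : Fin n → α) (i : Fin n) : IsClosed {a | x ∈ sector a i} := by
  have eq_iInter : {a | x ∈ sector a i} = ⋂ j, {a | x j - a j ≤ x i - a i} := Set.ofPred_forall _
  rw [eq_iInter]
  exact isClosed_iInter fun j => isClosed_le (by fun_prop) (by fun_prop)

theorem eventually_forall_mem_sector_imp {ι : Type*} [Finite ι] (w : ι → Fin n → α)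
    (v : Fin n → α) (i : Fin n) :
    ∀ᶠ x in 𝓝 v, ∀ r, w r ∈ sector x i → w r ∈ sector v i := by
  refine eventually_all.mpr fun r => ?_
  by_cases hr : w r ∈ sector v i
  · exact .of_forall fun _ _ => hr
  · filter_upwards [(isClosed_setOf_mem_sector (w r) i).isOpen_compl.mem_nhds hr] with x hx hrx
    exact absurd hrx hx

theorem exists_nhd_extreme_of_type_general [IsOrderedAddMonoid α] (vs : Fin p → Fin n → α)
    (v : Fin n → α) (i : Fin n) (hv : ExtremeOfType (tropPoly vs) v i) :
    ∃ N : Set (Fin n → α), IsOpen N ∧ v ∈ N ∧ ∀ x ∈ tropPoly vs ∩ N, v ∈ sector x i := by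
  obtain ⟨N, hN, hNopen, hvN⟩ := eventually_nhds_iff.mp (eventually_forall_mem_sector_imp vs v i)
  refine ⟨N, hNopen, hvN, fun x ⟨hxP, hxN⟩ => ?_⟩
  obtain ⟨r, hrx⟩ := exists_generator_mem_sector hxP i
  have hrv : vs r ∈ sector v i := hN x hxN r hrx
  have hvr : v ∈ sector (vs r) i := hv.mem_sector_of_mem_sector (generator_mem_tropPoly vs r) hrv
  exact mem_sector_trans hvr hrx

end Topology

/-- if `v` is an extreme point of the tropical polytope `P` of type `i`, then
there is an open neighborhood `N` of `v` such that `v ∈ S(x,i)` for every `x ∈ P ∩ N`. -/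
theorem exists_nhd_extreme_of_type {n p : ℕ} (vs : Fin p → Fin n → ℝ)
    (v : Fin n → ℝ) (i : Fin n) (hv : ExtremeOfType (tropPoly vs) v i) :
    ∃ N : Set (Fin n → ℝ), IsOpen N ∧ v ∈ N ∧
      ∀ x ∈ tropPoly vs ∩ N, v ∈ sector x i :=
  exists_nhd_extreme_of_type_general vs v i hv
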